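/- arXiv:2204.06686 — 2 statements merged into one kernel-verified Lean document; each statement's English description precedes it below -/
import Mathlib

section
/- There exists an absolute constant c > 0 such that for every d ≥ 1, every α ∈ [1/2, 1], every n ∈ ℕ and every f : {0,1}^n → {0,1}, E_x[s_f(x)^α] ≥ c·d^α·W_{≥d}[f]. -/
open Finset

noncomputable section

/-- Expectation over the uniform distribution on `{0,1}^n`. -/
def hcExp (n : ℕ) (g : (Fin n → Bool) → ℝ) : ℝ :=
  (∑ x : Fin n → Bool, g x) / 2 ^ n

/-- Flip the `i`-th coordinate of `x`. -/
def hcFlip {n : ℕ} (x : Fin n → Bool) (i : Fin n) : Fin n → Bool :=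
  Function.update x i (!(x i))

/-- Sensitivity of `f` at `x`. -/
def sens {n : ℕ} (f : (Fin n → Bool) → Bool) (x : Fin n → Bool) : ℕ :=
  (Finset.univ.filter fun i => f (hcFlip x i) ≠ f x).card

/-- `f` with values in `{0,1} ⊆ ℝ`. -/
def toReal {n : ℕ} (f : (Fin n → Bool) → Bool) : (Fin n → Bool) → ℝ :=
  fun x => if f x then 1 else 0

/-- Variance of a Boolean function. -/
def hcVar (n : ℕ) (f : (Fin n → Bool) → Bool) : ℝ :=
  hcExp n (toReal f) - (hcExp n (toReal f)) ^ 2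

/-- Influence of coordinate `i`. -/
def influence (n : ℕ) (f : (Fin n → Bool) → Bool) (i : Fin n) : ℝ :=
  hcExp n (fun x => if f (hcFlip x i) = f x then 0 else 1)

/-- Fourier character. -/
def chi {n : ℕ} (S : Finset (Fin n)) (x : Fin n → Bool) : ℝ :=
  ∏ i ∈ S, (if x i then (-1 : ℝ) else 1)

/-- Fourier coefficient of `g` at `S`. -/
def fcoef (n : ℕ) (g : (Fin n → Bool) → ℝ) (S : Finset (Fin n)) : ℝ :=
  hcExp n (fun x => g x * chi S x)

/-- Derivative of `g` along coordinate `i`. -/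
def derivOn {n : ℕ} (g : (Fin n → Bool) → ℝ) (i : Fin n) (x : Fin n → Bool) : ℝ :=
  g (Function.update x i false) - g (Function.update x i true)

/-- Euclidean norm of the gradient of `g` at `x`. -/
def gradNorm2 {n : ℕ} (g : (Fin n → Bool) → ℝ) (x : Fin n → Bool) : ℝ :=
  Real.sqrt (∑ i, (derivOn g i x) ^ 2)

/-- `ℓ_p` norm of the gradient of `g` at `x`. -/
def gradNormP {n : ℕ} (p : ℝ) (g : (Fin n → Bool) → ℝ) (x : Fin n → Bool) : ℝ :=
  (∑ i, |derivOn g i x| ^ p) ^ (1 / p)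

/-- Fourier weight at exactly level `d`. -/
def wEq (n : ℕ) (g : (Fin n → Bool) → ℝ) (d : ℕ) : ℝ :=
  ∑ S ∈ Finset.univ.filter (fun S : Finset (Fin n) => S.card = d), (fcoef n g S) ^ 2

/-- Approximate level-`d` Fourier weight: levels in `[d, 2d)`. -/
def wApprox (n : ℕ) (g : (Fin n → Bool) → ℝ) (d : ℕ) : ℝ :=
  ∑ S ∈ Finset.univ.filter (fun S : Finset (Fin n) => d ≤ S.card ∧ S.card < 2 * d),
    (fcoef n g S) ^ 2

/-- Fourier weight at levels `≥ d`. -/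
def wGe (n : ℕ) (g : (Fin n → Bool) → ℝ) (d : ℕ) : ℝ :=
  ∑ S ∈ Finset.univ.filter (fun S : Finset (Fin n) => d ≤ S.card), (fcoef n g S) ^ 2

/-!
Let `Stab r = ∑ S, r ^ #S * fcoef S ^ 2` be the noise stability of `f`. Since
`(1 - 1 / d) ^ d ≤ 1 / 2`, the weight at levels `≥ d` is at most `2 * (Stab 1 - Stab (1 - 1 / d))`,
so the point is to bound the derivative of `Stab`. Differentiating the noise kernel brings down the
sum of the score functions of the coordinates. The `i`-th one is odd in `y i`, so `f` may be
replaced by its coordinate Laplacian `L_i f`, and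
`Stab' r = 𝔼 y, 𝔼 x, K r x y * f x * ∑ i, L_i f y * score r (x i) (y i)`.
Under the kernel the scores have `L¹` norm `1` and are orthogonal with Fisher information
`1 / (1 - r ^ 2)`. With `s` the sensitivity at `y`, the inner expectation is therefore at most both
`s / 2` and, by Cauchy–Schwarz, `√s / (2 * √(1 - r))`. Geometric interpolation between the two gives
`Stab' r ≤ 𝔼 s ^ α * (1 - r) ^ (α - 1) / 2`, which is integrated over `[1 - 1 / d, 1]`.
-/

open scoped BigOperators

section

variable {n : ℕ}

lemma hcExp_eq_expect (g : (Fin n → Bool) → ℝ) : hcExp n g = 𝔼 x, g x := by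
  simp [hcExp, Fintype.expect_eq_sum_div_card]

lemma expect_bool (g : Bool → ℝ) : 𝔼 b, g b = (g true + g false) / 2 := by
  rw [Fintype.expect_eq_sum_div_card, Fintype.sum_bool, Fintype.card_bool, Nat.cast_two]

lemma expect_pi_prod {ι K : Type*} [Fintype ι] [DecidableEq ι] [Semifield K] [CharZero K]
    {κ : ι → Type*} [∀ i, Fintype (κ i)] (g : ∀ i, κ i → K) :
    𝔼 x : ∀ i, κ i, ∏ i, g i (x i) = ∏ i, 𝔼 a, g i a := by
  simp only [Fintype.expect_eq_sum_div_card, prod_div_distrib, prod_univ_sum,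
    Fintype.piFinset_univ, Fintype.card_pi, Nat.cast_prod]

lemma expect_weighted_mul_sq_le {ι : Type*} (s : Finset ι) {w : ι → ℝ} (hw : ∀ x, 0 ≤ w x)
    (F G : ι → ℝ) :
    (𝔼 x ∈ s, w x * (F x * G x)) ^ 2 ≤
      (𝔼 x ∈ s, w x * F x ^ 2) * 𝔼 x ∈ s, w x * G x ^ 2 := by
  have hmul (x : ι) : √(w x) * F x * (√(w x) * G x) = w x * (F x * G x) := by
    rw [mul_mul_mul_comm, Real.mul_self_sqrt (hw x)]
  simpa only [hmul, mul_pow, Real.sq_sqrt (hw _)] using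
    expect_mul_sq_le_sq_mul_sq s (fun x ↦ √(w x) * F x) (fun x ↦ √(w x) * G x)

lemma le_rpow_mul_rpow_of_le_of_sq_le {X s t α : ℝ} (hX : 0 ≤ X) (ht : 0 < t)
    (hα : 1 / 2 ≤ α) (hα' : α ≤ 1) (h₁ : X ≤ s) (h₂ : X ^ 2 ≤ s / t) :
    X ≤ s ^ α * t ^ (α - 1) := by
  have hs : 0 ≤ s := hX.trans h₁
  calc X = X ^ (2 * α - 1 + (2 : ℕ) * (1 - α)) := by
        rw [Nat.cast_two, show 2 * α - 1 + 2 * (1 - α) = 1 by ring, Real.rpow_one]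
    _ = X ^ (2 * α - 1) * (X ^ 2) ^ (1 - α) := by
        rw [Real.rpow_add_of_nonneg hX (by linarith) (by norm_num; linarith),
          Real.rpow_natCast_mul hX]
    _ ≤ s ^ (2 * α - 1) * (s / t) ^ (1 - α) := by gcongr; linarith
    _ = s ^ (2 * α - 1 + (1 - α)) * t ^ (α - 1) := by
        rw [Real.div_rpow hs ht.le, Real.rpow_add_of_nonneg hs (by linarith) (by linarith),
          ← neg_sub 1 α, Real.rpow_neg ht.le, div_eq_mul_inv, mul_assoc]
    _ = s ^ α * t ^ (α - 1) := by ring_nf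

lemma sub_le_of_deriv_le_mul_rpow {φ : ℝ → ℝ} {a b C α : ℝ} (hα : 0 < α) (hab : a ≤ b)
    (hcont : ContinuousOn φ (Set.Icc a b)) (hdiff : ∀ r ∈ Set.Ico a b, DifferentiableAt ℝ φ r)
    (hderiv : ∀ r ∈ Set.Ico a b, deriv φ r ≤ C * (b - r) ^ (α - 1)) :
    φ b - φ a ≤ C / α * (b - a) ^ α := by
  set B : ℝ → ℝ := fun r ↦ φ a + C / α * ((b - a) ^ α - (b - r) ^ α)
  have hB (r : ℝ) (hr : r < b) : HasDerivAt B (C * (b - r) ^ (α - 1)) r := by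
    have hpow := ((hasDerivAt_id r).const_sub b).rpow_const (p := α) (.inl (sub_pos.2 hr).ne')
    convert! ((hpow.const_sub ((b - a) ^ α)).const_mul (C / α)).const_add _ using 1
    simp only [id]
    field_simp
  have hBcont : Continuous B := by fun_prop (disch := exact hα.le)
  have hle : φ b ≤ B b :=
    image_le_of_deriv_right_le_deriv_boundary hcont
      (fun r hr ↦ (hdiff r hr).hasDerivAt.hasDerivWithinAt) (by simp [B]) hBcont.continuousOn
      (fun r hr ↦ (hB r hr.2).hasDerivWithinAt) hderiv (Set.right_mem_Icc.2 hab)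
  simpa [B, hα.ne', add_comm] using hle

/-- The product of the signs `(-1) ^ a` and `(-1) ^ b`, in terms of which characters and noise
kernels are written. -/
def agreement (a b : Bool) : ℝ := if a = b then 1 else -1

lemma agreement_not_right (a b : Bool) : agreement a (!b) = -agreement a b := by
  cases a <;> cases b <;> simp [agreement]

lemma chi_mul_chi (S : Finset (Fin n)) (x y : Fin n → Bool) :
    chi S x * chi S y = ∏ i ∈ S, agreement (x i) (y i) := by
  rw [chi, chi, ← prod_mul_distrib]
  refine prod_congr rfl fun i _ ↦ ?_
  cases x i <;> cases y i <;> simp [agreement]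

lemma expect_one_add_mul_agreement (r : ℝ) (b : Bool) : 𝔼 a, (1 + r * agreement a b) = 1 := by
  rw [expect_bool]
  cases b <;> simp [agreement] <;> ring

lemma one_add_mul_agreement_pos {r : ℝ} (hr : |r| < 1) (a b : Bool) :
    0 < 1 + r * agreement a b := by
  obtain ⟨h₁, h₂⟩ := abs_lt.1 hr
  cases a <;> cases b <;> simp [agreement] <;> linarith

/-- The score function: the logarithmic derivative in `r` of the density `1 + r * agreement a b`
of an `r`-correlated copy `a` of the bit `b`. -/
def score (r : ℝ) (a b : Bool) : ℝ := agreement a b / (1 + r * agreement a b)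

lemma expect_mul_score {r : ℝ} (hr : |r| < 1) (b : Bool) :
    𝔼 a, (1 + r * agreement a b) * score r a b = 0 := by
  simp_rw [score, mul_div_cancel₀ _ (one_add_mul_agreement_pos hr _ _).ne']
  rw [expect_bool]
  cases b <;> simp [agreement]

lemma expect_mul_abs_score {r : ℝ} (hr : |r| < 1) (b : Bool) :
    𝔼 a, (1 + r * agreement a b) * |score r a b| = 1 := by
  simp_rw [score, abs_div, abs_of_pos (one_add_mul_agreement_pos hr _ _),
    mul_div_cancel₀ _ (one_add_mul_agreement_pos hr _ _).ne']
  rw [expect_bool]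
  cases b <;> simp [agreement]

lemma expect_mul_score_sq {r : ℝ} (hr : |r| < 1) (b : Bool) :
    𝔼 a, (1 + r * agreement a b) * score r a b ^ 2 = 1 / (1 - r ^ 2) := by
  obtain ⟨h₁, h₂⟩ := abs_lt.1 hr
  have hp : 1 + r ≠ 0 := by linarith
  have hm : 1 + -r ≠ 0 := by linarith
  have hpm : 1 - r ^ 2 ≠ 0 := by
    rw [show 1 - r ^ 2 = (1 + r) * (1 + -r) by ring]
    exact mul_ne_zero hp hm
  rw [expect_bool]
  cases b <;> simp [score, agreement] <;> field_simp <;> ring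

/-- The density, with respect to the uniform distribution, of the `r`-correlated copy `x` of `y`:
each `x i` independently has correlation `r` with `y i`. -/
def noiseKernel (r : ℝ) (x y : Fin n → Bool) : ℝ := ∏ i, (1 + r * agreement (x i) (y i))

lemma noiseKernel_eq_sum_chi (r : ℝ) (x y : Fin n → Bool) :
    noiseKernel r x y = ∑ S : Finset (Fin n), r ^ #S * (chi S x * chi S y) := by
  simp only [noiseKernel, prod_one_add, powerset_univ, prod_mul_distrib, prod_const, chi_mul_chi]

lemma noiseKernel_pos {r : ℝ} (hr : |r| < 1) (x y : Fin n → Bool) : 0 < noiseKernel r x y :=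
  prod_pos fun _ _ ↦ one_add_mul_agreement_pos hr _ _

lemma expect_noiseKernel_mul_prod (r : ℝ) (y : Fin n → Bool) (S : Finset (Fin n))
    (g : Fin n → Bool → ℝ) :
    𝔼 x, noiseKernel r x y * ∏ i ∈ S, g i (x i) =
      ∏ i ∈ S, 𝔼 a, (1 + r * agreement a (y i)) * g i a := by
  simp only [← Fintype.prod_ite_mem S, noiseKernel, ← prod_mul_distrib]
  rw [expect_pi_prod fun i a ↦ (1 + r * agreement a (y i)) * if i ∈ S then g i a else 1]
  refine prod_congr rfl fun i _ ↦ ?_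
  split_ifs
  · rfl
  · simp only [mul_one, expect_one_add_mul_agreement]

lemma expect_noiseKernel (r : ℝ) (y : Fin n → Bool) : 𝔼 x, noiseKernel r x y = 1 := by
  simpa using expect_noiseKernel_mul_prod r y ∅ 1

lemma expect_noiseKernel_mul_abs_score {r : ℝ} (hr : |r| < 1) (y : Fin n → Bool) (i : Fin n) :
    𝔼 x, noiseKernel r x y * |score r (x i) (y i)| = 1 := by
  simpa only [prod_singleton, expect_mul_abs_score hr] using
    expect_noiseKernel_mul_prod r y {i} fun j a ↦ |score r a (y j)|

lemma expect_noiseKernel_mul_score_mul_score {r : ℝ} (hr : |r| < 1) (y : Fin n → Bool)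
    (i j : Fin n) :
    𝔼 x, noiseKernel r x y * (score r (x i) (y i) * score r (x j) (y j)) =
      if i = j then 1 / (1 - r ^ 2) else 0 := by
  split_ifs with hij
  · subst hij
    simp only [← sq]
    rw [← expect_mul_score_sq hr (y i)]
    simpa only [prod_singleton] using
      expect_noiseKernel_mul_prod r y {i} fun k a ↦ score r a (y k) ^ 2
  · simpa only [prod_pair hij, expect_mul_score hr, mul_zero] using
      expect_noiseKernel_mul_prod r y {i, j} fun k a ↦ score r a (y k)

lemma expect_noiseKernel_mul_sum_score_sq {r : ℝ} (hr : |r| < 1) (y : Fin n → Bool)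
    (a : Fin n → ℝ) :
    𝔼 x, noiseKernel r x y * (∑ i, a i * score r (x i) (y i)) ^ 2 =
      (∑ i, a i ^ 2) / (1 - r ^ 2) := by
  calc 𝔼 x, noiseKernel r x y * (∑ i, a i * score r (x i) (y i)) ^ 2
      = ∑ i, ∑ j, a i * a j *
          𝔼 x, noiseKernel r x y * (score r (x i) (y i) * score r (x j) (y j)) := by
        simp_rw [mul_expect, ← expect_sum_comm, sq, sum_mul_sum, mul_sum]
        refine expect_congr rfl fun x _ ↦ sum_congr rfl fun i _ ↦ sum_congr rfl fun j _ ↦ ?_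
        ring
    _ = (∑ i, a i ^ 2) / (1 - r ^ 2) := by
        simp [expect_noiseKernel_mul_score_mul_score hr, sum_mul, sq, div_eq_mul_inv]

lemma abs_expect_noiseKernel_mul_sum_score_le {r : ℝ} (hr : |r| < 1)
    {F : (Fin n → Bool) → ℝ} (hF : ∀ x, |F x| ≤ 1) (y : Fin n → Bool) (a : Fin n → ℝ) :
    |𝔼 x, noiseKernel r x y * (F x * ∑ i, a i * score r (x i) (y i))| ≤ ∑ i, |a i| := by
  calc |𝔼 x, noiseKernel r x y * (F x * ∑ i, a i * score r (x i) (y i))|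
      ≤ 𝔼 x, |noiseKernel r x y * (F x * ∑ i, a i * score r (x i) (y i))| := abs_expect_le _ _
    _ ≤ 𝔼 x, noiseKernel r x y * ∑ i, |a i| * |score r (x i) (y i)| := by
        refine expect_le_expect fun x _ ↦ ?_
        rw [abs_mul, abs_of_pos (noiseKernel_pos hr x y), abs_mul]
        refine mul_le_mul_of_nonneg_left ?_ (noiseKernel_pos hr x y).le
        refine (mul_le_of_le_one_left (abs_nonneg _) (hF x)).trans ?_
        simpa only [abs_mul] using abs_sum_le_sum_abs (fun i ↦ a i * score r (x i) (y i)) univ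
    _ = ∑ i, |a i| * 𝔼 x, noiseKernel r x y * |score r (x i) (y i)| := by
        simp_rw [mul_expect, ← expect_sum_comm, mul_sum, mul_left_comm]
    _ = ∑ i, |a i| := by simp_rw [expect_noiseKernel_mul_abs_score hr, mul_one]

lemma sq_expect_noiseKernel_mul_sum_score_le {r : ℝ} (hr : |r| < 1)
    {F : (Fin n → Bool) → ℝ} (hF : ∀ x, |F x| ≤ 1) (y : Fin n → Bool) (a : Fin n → ℝ) :
    (𝔼 x, noiseKernel r x y * (F x * ∑ i, a i * score r (x i) (y i))) ^ 2 ≤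
      (∑ i, a i ^ 2) / (1 - r ^ 2) := by
  have hK (x : Fin n → Bool) : 0 ≤ noiseKernel r x y := (noiseKernel_pos hr x y).le
  have hF₂ : 𝔼 x, noiseKernel r x y * F x ^ 2 ≤ 1 := by
    rw [← expect_noiseKernel r y]
    exact expect_le_expect fun x _ ↦
      mul_le_of_le_one_right (hK x) ((sq_le_one_iff_abs_le_one _).2 (hF x))
  refine (expect_weighted_mul_sq_le univ hK F _).trans ?_
  rw [← expect_noiseKernel_mul_sum_score_sq hr y a]
  exact mul_le_of_le_one_left (expect_nonneg fun x _ ↦ mul_nonneg (hK x) (sq_nonneg _)) hF₂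

lemma noiseKernel_mul_score {r : ℝ} (hr : |r| < 1) (x y : Fin n → Bool) (i : Fin n) :
    noiseKernel r x y * score r (x i) (y i) =
      (∏ j ∈ univ.erase i, (1 + r * agreement (x j) (y j))) * agreement (x i) (y i) := by
  have := (one_add_mul_agreement_pos hr (x i) (y i)).ne'
  rw [noiseKernel, ← prod_erase_mul _ _ (mem_univ i), score, mul_assoc, mul_div_cancel₀ _ this]

lemma noiseKernel_mul_score_hcFlip {r : ℝ} (hr : |r| < 1) (x y : Fin n → Bool) (i : Fin n) :
    noiseKernel r x (hcFlip y i) * score r (x i) (hcFlip y i i) =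
      -(noiseKernel r x y * score r (x i) (y i)) := by
  have h (j) (hj : j ∈ univ.erase i) : hcFlip y i j = y j :=
    Function.update_of_ne (ne_of_mem_erase hj) _ _
  rw [noiseKernel_mul_score hr, noiseKernel_mul_score hr,
    prod_congr rfl fun j hj ↦ by rw [h j hj]]
  simp [hcFlip, agreement_not_right]

lemma hasDerivAt_noiseKernel {r : ℝ} (hr : |r| < 1) (x y : Fin n → Bool) :
    HasDerivAt (fun r ↦ noiseKernel r x y)
      (noiseKernel r x y * ∑ i, score r (x i) (y i)) r := by
  simp only [mul_sum, noiseKernel_mul_score hr]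
  refine HasDerivAt.fun_finsetProd (f := fun i r ↦ 1 + r * agreement (x i) (y i)) fun i _ ↦ ?_
  simpa using ((hasDerivAt_id r).mul_const (agreement (x i) (y i))).const_add 1

/-- The coordinate Laplacian `L_i F`, whose Fourier expansion is that of `F` restricted to the
sets containing `i`. For Boolean `F` it is `±1/2` at the sensitive coordinates and `0` elsewhere. -/
def coordLaplacian (F : (Fin n → Bool) → ℝ) (i : Fin n) (x : Fin n → Bool) : ℝ :=
  (F x - F (hcFlip x i)) / 2

lemma hcFlip_involutive (i : Fin n) : Function.Involutive fun x : Fin n → Bool ↦ hcFlip x i := by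
  intro x
  simp [hcFlip]

lemma expect_mul_eq_expect_coordLaplacian_mul (F : (Fin n → Bool) → ℝ) {g : (Fin n → Bool) → ℝ}
    {i : Fin n} (hg : ∀ x, g (hcFlip x i) = -g x) :
    𝔼 x, F x * g x = 𝔼 x, coordLaplacian F i x * g x := by
  have hflip : 𝔼 x, F (hcFlip x i) * g x = -𝔼 x, F x * g x := by
    rw [← expect_neg_distrib]
    refine Fintype.expect_equiv (hcFlip_involutive i).toPerm _ _ fun x ↦ ?_
    simp [hg]
  calc 𝔼 x, F x * g x = (𝔼 x, F x * g x - 𝔼 x, F (hcFlip x i) * g x) / 2 := by rw [hflip]; ring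
    _ = 𝔼 x, coordLaplacian F i x * g x := by
        rw [← expect_sub_distrib, expect_div]
        refine expect_congr rfl fun x _ ↦ ?_
        rw [coordLaplacian]
        ring

lemma abs_toReal_le_one (f : (Fin n → Bool) → Bool) (x : Fin n → Bool) : |toReal f x| ≤ 1 := by
  unfold toReal
  split_ifs <;> simp

lemma sum_abs_coordLaplacian_toReal (f : (Fin n → Bool) → Bool) (x : Fin n → Bool) :
    ∑ i, |coordLaplacian (toReal f) i x| = sens f x / 2 := by
  have h (i) : |coordLaplacian (toReal f) i x| = if f (hcFlip x i) ≠ f x then 1 / 2 else 0 := by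
    cases hx : f x <;> cases hi : f (hcFlip x i) <;> norm_num [coordLaplacian, toReal, hx, hi]
  simp_rw [h]
  rw [← sum_filter, sum_const, nsmul_eq_mul, sens, mul_one_div]

lemma sum_sq_coordLaplacian_toReal (f : (Fin n → Bool) → Bool) (x : Fin n → Bool) :
    ∑ i, coordLaplacian (toReal f) i x ^ 2 = sens f x / 4 := by
  have h (i) : coordLaplacian (toReal f) i x ^ 2 = |coordLaplacian (toReal f) i x| / 2 := by
    cases hx : f x <;> cases hi : f (hcFlip x i) <;> norm_num [coordLaplacian, toReal, hx, hi]
  simp_rw [h, ← sum_div, sum_abs_coordLaplacian_toReal]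
  ring

/-- The noise stability of `F`, which for `|r| ≤ 1` is the expectation of `F x * F y` over
`r`-correlated uniform `x` and `y`. -/
def noiseStability (F : (Fin n → Bool) → ℝ) (r : ℝ) : ℝ :=
  ∑ S : Finset (Fin n), r ^ #S * fcoef n F S ^ 2

lemma noiseStability_eq_expect (F : (Fin n → Bool) → ℝ) (r : ℝ) :
    noiseStability F r = 𝔼 y, 𝔼 x, F x * F y * noiseKernel r x y := by
  simp_rw [noiseKernel_eq_sum_chi, mul_sum, expect_sum_comm, noiseStability]
  refine sum_congr rfl fun S _ ↦ ?_
  rw [fcoef, hcExp_eq_expect, sq, Fintype.expect_mul_expect, mul_expect, expect_comm]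
  simp_rw [mul_expect]
  refine expect_congr rfl fun x _ ↦ expect_congr rfl fun y _ ↦ ?_
  ring

lemma differentiable_noiseStability (F : (Fin n → Bool) → ℝ) :
    Differentiable ℝ (noiseStability F) := by
  unfold noiseStability
  fun_prop

lemma one_sub_pow_mul_wGe_le (F : (Fin n → Bool) → ℝ) (d : ℕ) {r : ℝ} (hr₀ : 0 ≤ r)
    (hr₁ : r ≤ 1) :
    (1 - r ^ d) * wGe n F d ≤ noiseStability F 1 - noiseStability F r := by
  simp only [noiseStability, wGe, ← sum_sub_distrib, mul_sum, sum_filter, one_pow,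
    ← sub_mul, mul_ite, mul_zero]
  refine sum_le_sum fun S _ ↦ ?_
  split_ifs with hS
  · exact mul_le_mul_of_nonneg_right (sub_le_sub_left (pow_le_pow_of_le_one hr₀ hr₁ hS) 1)
      (sq_nonneg _)
  · exact mul_nonneg (sub_nonneg.2 (pow_le_one₀ hr₀ hr₁)) (sq_nonneg _)

lemma hasDerivAt_noiseStability (F : (Fin n → Bool) → ℝ) {r : ℝ} (hr : |r| < 1) :
    HasDerivAt (noiseStability F)
      (𝔼 y, 𝔼 x, noiseKernel r x y *
        (F x * ∑ i, coordLaplacian F i y * score r (x i) (y i))) r := by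
  have hderiv : HasDerivAt (noiseStability F)
      (𝔼 y, 𝔼 x, F x * F y * (noiseKernel r x y * ∑ i, score r (x i) (y i))) r := by
    rw [funext (noiseStability_eq_expect F)]
    simp only [Fintype.expect_eq_sum_div_card]
    exact (HasDerivAt.fun_sum fun y _ ↦ (HasDerivAt.fun_sum fun x _ ↦
      (hasDerivAt_noiseKernel hr x y).const_mul _).div_const _).div_const _
  convert! hderiv using 1
  rw [expect_comm, expect_comm _ _ fun y x ↦ F x * F y * _]
  refine expect_congr rfl fun x _ ↦ ?_
  simp only [mul_sum, expect_sum_comm]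
  refine sum_congr rfl fun i _ ↦ ?_
  have h := expect_mul_eq_expect_coordLaplacian_mul F
    (g := fun y ↦ noiseKernel r x y * score r (x i) (y i))
    (noiseKernel_mul_score_hcFlip hr x · i)
  calc 𝔼 y, noiseKernel r x y * (F x * (coordLaplacian F i y * score r (x i) (y i)))
      = F x * 𝔼 y, coordLaplacian F i y * (noiseKernel r x y * score r (x i) (y i)) := by
        rw [mul_expect]
        exact expect_congr rfl fun y _ ↦ by ring
    _ = 𝔼 y, F x * F y * (noiseKernel r x y * score r (x i) (y i)) := by
        simp_rw [← h, mul_expect, mul_assoc]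

lemma deriv_noiseStability_toReal_le (f : (Fin n → Bool) → Bool) {α r : ℝ} (hα : 1 / 2 ≤ α)
    (hα' : α ≤ 1) (hr₀ : 0 ≤ r) (hr₁ : r < 1) :
    deriv (noiseStability (toReal f)) r ≤
      (𝔼 y, (sens f y : ℝ) ^ α) / 2 * (1 - r) ^ (α - 1) := by
  have hr : |r| < 1 := by rwa [abs_of_nonneg hr₀]
  rw [(hasDerivAt_noiseStability (toReal f) hr).deriv, div_mul_eq_mul_div, expect_mul, expect_div]
  refine expect_le_expect fun y _ ↦ (le_abs_self _).trans ?_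
  have h₁ := abs_expect_noiseKernel_mul_sum_score_le hr (abs_toReal_le_one f) y
    (coordLaplacian (toReal f) · y)
  have h₂ := sq_expect_noiseKernel_mul_sum_score_le hr (abs_toReal_le_one f) y
    (coordLaplacian (toReal f) · y)
  rw [sum_abs_coordLaplacian_toReal] at h₁
  rw [sum_sq_coordLaplacian_toReal, ← sq_abs] at h₂
  set X := |𝔼 x, noiseKernel r x y *
    (toReal f x * ∑ i, coordLaplacian (toReal f) i y * score r (x i) (y i))|
  have hle : (sens f y : ℝ) / 4 / (1 - r ^ 2) ≤ sens f y / 4 / (1 - r) := by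
    gcongr; nlinarith
  rw [le_div_iff₀' two_pos]
  refine le_rpow_mul_rpow_of_le_of_sq_le (by positivity) (sub_pos.2 hr₁) hα hα' (by linarith) ?_
  calc (2 * X) ^ 2 = 4 * X ^ 2 := by ring
    _ ≤ 4 * (sens f y / 4 / (1 - r)) := by gcongr; exact h₂.trans hle
    _ = sens f y / (1 - r) := by ring

lemma noiseStability_toReal_sub_le (f : (Fin n → Bool) → Bool) {α δ : ℝ} (hα : 1 / 2 ≤ α)
    (hα' : α ≤ 1) (hδ₀ : 0 ≤ δ) (hδ₁ : δ ≤ 1) :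
    noiseStability (toReal f) 1 - noiseStability (toReal f) (1 - δ) ≤
      δ ^ α * 𝔼 x, (sens f x : ℝ) ^ α := by
  set M := 𝔼 x, (sens f x : ℝ) ^ α
  have hM : 0 ≤ M := expect_nonneg fun x _ ↦ by positivity
  have hφ := differentiable_noiseStability (toReal f)
  calc noiseStability (toReal f) 1 - noiseStability (toReal f) (1 - δ)
      ≤ M / 2 / α * (1 - (1 - δ)) ^ α :=
        sub_le_of_deriv_le_mul_rpow (by linarith) (by linarith) hφ.continuous.continuousOn
          (fun r _ ↦ hφ r) fun r hr ↦
            deriv_noiseStability_toReal_le f hα hα' (by linarith [hr.1]) hr.2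
    _ ≤ M * δ ^ α := by
        rw [sub_sub_cancel, div_div]
        gcongr
        exact div_le_self hM (by linarith)
    _ = δ ^ α * M := mul_comm _ _

lemma half_mul_wGe_le_noiseStability_sub (F : (Fin n → Bool) → ℝ) {d : ℕ} (hd : 1 ≤ d) :
    1 / 2 * wGe n F d ≤ noiseStability F 1 - noiseStability F (1 - 1 / d) := by
  have hd' : (1 : ℝ) ≤ d := by exact_mod_cast hd
  have hpow : (1 - 1 / d : ℝ) ^ d ≤ 1 / 2 :=
    (Real.one_sub_div_pow_le_exp_neg hd').trans Real.exp_neg_one_lt_half.le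
  have hW : 0 ≤ wGe n F d := sum_nonneg fun _ _ ↦ sq_nonneg _
  calc 1 / 2 * wGe n F d ≤ (1 - (1 - 1 / d : ℝ) ^ d) * wGe n F d := by gcongr; linarith
    _ ≤ noiseStability F 1 - noiseStability F (1 - 1 / d) :=
        one_sub_pow_mul_wGe_le F d (sub_nonneg.2 (div_le_one_of_le₀ hd' (by positivity)))
          (sub_le_self _ (by positivity))

end

theorem sensitivity_moment_lower_bound_level_ge_d :
    ∃ c : ℝ, 0 < c ∧ ∀ (d : ℕ), 1 ≤ d → ∀ (α : ℝ), 1 / 2 ≤ α → α ≤ 1 →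
      ∀ (n : ℕ) (f : (Fin n → Bool) → Bool),
        hcExp n (fun x => (sens f x : ℝ) ^ α) ≥
          c * (d : ℝ) ^ α * wGe n (toReal f) d := by
  refine ⟨1 / 2, by norm_num, fun d hd α hα hα' n f ↦ ?_⟩
  have hd' : (1 : ℝ) ≤ d := by exact_mod_cast hd
  have hdα : 0 < (d : ℝ) ^ α := by positivity
  rw [hcExp_eq_expect, ge_iff_le]
  calc 1 / 2 * (d : ℝ) ^ α * wGe n (toReal f) d
      = d ^ α * (1 / 2 * wGe n (toReal f) d) := by ring
    _ ≤ d ^ α * ((1 / d : ℝ) ^ α * 𝔼 x, (sens f x : ℝ) ^ α) := by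
        refine mul_le_mul_of_nonneg_left ?_ hdα.le
        exact (half_mul_wGe_le_noiseStability_sub _ hd).trans <|
          noiseStability_toReal_sub_le f hα hα' (by positivity)
            (div_le_one_of_le₀ hd' (by positivity))
    _ = 𝔼 x, (sens f x : ℝ) ^ α := by
        rw [← mul_assoc, Real.div_rpow zero_le_one (by positivity), Real.one_rpow,
          mul_one_div_cancel hdα.ne', one_mul]

end
end

section
/- There exists an absolute constant c > 0 such that for every n ∈ ℕ, every f : {0,1}^n → {0,1} with var(f) > 0, and every 2-coloring col of the edges of the hypercube into red and blue, Talagrand_col(f) ≥ c·var(f)·√(log(1/var(f))). -/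
open Finset

noncomputable section

/-- Number of red sensitive edges at `x` counted when `f x = 1` (red sensitivity).
Here a coloring `col : (Fin n → Bool) → Fin n → Bool` gives the color (`true` = red,
`false` = blue) of the edge `(x, x ⊕ eᵢ)`. -/
def sRed {n : ℕ} (f : (Fin n → Bool) → Bool) (col : (Fin n → Bool) → Fin n → Bool)
    (x : Fin n → Bool) : ℕ :=
  if f x then
    (Finset.univ.filter fun i => f (hcFlip x i) ≠ f x ∧ col x i = true).card
  else 0

/-- Blue sensitivity: counted when `f x = 0`. -/
def sBlue {n : ℕ} (f : (Fin n → Bool) → Bool) (col : (Fin n → Bool) → Fin n → Bool)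
    (x : Fin n → Bool) : ℕ :=
  if f x then 0
  else (Finset.univ.filter fun i => f (hcFlip x i) ≠ f x ∧ col x i = false).card

/-- The Talagrand boundary with respect to the coloring `col`. -/
def talagrandCol {n : ℕ} (f : (Fin n → Bool) → Bool)
    (col : (Fin n → Bool) → Fin n → Bool) : ℝ :=
  hcExp n (fun x => Real.sqrt (sRed f col x)) + hcExp n (fun x => Real.sqrt (sBlue f col x))

/-- The coloring is symmetric: the two endpoints of an edge see the same color. -/
def colSymm {n : ℕ} (col : (Fin n → Bool) → Fin n → Bool) : Prop :=
  ∀ (x : Fin n → Bool) (i : Fin n), col (hcFlip x i) i = col x i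

/-!
Write `z ↦ F(z) = 𝔼_y f(y) ∏ (1 + zᵢ yᵢ)` for the multilinear extension of `f`, the expectation of
`f` under the product measure on the cube with means `zᵢ`; here `true` is the sign `-1`. The noise
stability `Stab_ρ(f) = 𝔼_x f(x) F(ρ x)` equals `𝔼 f` at `ρ = 1`, and the proof bounds the drop
`𝔼 f - Stab_ρ(f)` from both sides.

*Upper bound.* The derivative of `Stab_ρ(f)` in `ρ` is `∑ᵢ 𝔼_x f(x) xᵢ ∂ᵢF(ρ x)`. As `∂ᵢF(ρ x)` does
not depend on `xᵢ`, each sensitive edge may be charged to either of its endpoints: red edges to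
the one with value `1`, blue edges to the one with value `0`. Bessel's inequality under the biased
measure gives `∑ᵢ (1 - zᵢ²) ∂ᵢF(z)² ≤ 1`, so by Cauchy–Schwarz the derivative is at most
`Talagrand_col(f) / √(1 - ρ²)`, and integrating, the drop is at most `Talagrand_col(f) · arccos ρ`.

*Lower bound.* Hypercontractivity at `ρ = 1/3` and log-convexity of `Stab` in `log ρ` show that a
set of measure `μ ≤ 1/2` loses a constant fraction of its stability once `1 - ρ ≈ 1 / log (1 / μ)`,
where `arccos ρ ≈ 1 / √(log (1 / μ))`.
-/

open scoped BigOperators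

section BiasedMeasure

variable {n : ℕ}

/-- The sign `(-1)^b` of a bit, identifying `{0,1}` with `{1,-1}`. -/
def spin (b : Bool) : ℝ := if b then -1 else 1

lemma spin_not (b : Bool) : spin (!b) = -spin b := by cases b <;> simp [spin]

lemma spin_mul_self (b : Bool) : spin b * spin b = 1 := by cases b <;> simp [spin]

lemma one_add_mul_spin_nonneg {t : ℝ} (ht : t ∈ Set.Icc (-1) 1) (b : Bool) :
    0 ≤ 1 + t * spin b := by
  obtain ⟨_, _⟩ := ht
  cases b <;> simp only [spin, Bool.false_eq_true, if_true, if_false] <;> linarith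

lemma hcFlip_apply_self (x : Fin n → Bool) (i : Fin n) : hcFlip x i i = !(x i) := by
  simp [hcFlip]

lemma hcFlip_apply_of_ne (x : Fin n → Bool) {i j : Fin n} (h : j ≠ i) : hcFlip x i j = x j := by
  simp [hcFlip, h]

lemma hcFlip_hcFlip (x : Fin n → Bool) (i : Fin n) : hcFlip (hcFlip x i) i = x := by
  simp [hcFlip]

lemma expect_eq_zero_of_hcFlip_neg (i : Fin n) {F : (Fin n → Bool) → ℝ}
    (hF : ∀ x, F (hcFlip x i) = -F x) : 𝔼 x, F x = 0 := by
  have hinv : Function.Involutive fun x : Fin n → Bool => hcFlip x i := fun x => hcFlip_hcFlip x i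
  have hflip : 𝔼 x, F x = 𝔼 x, -F x :=
    Fintype.expect_equiv hinv.toPerm _ _ fun x => by
      rw [Function.Involutive.coe_toPerm, hF, neg_neg]
  rw [Finset.expect_neg_distrib] at hflip
  linarith

/-- The density, relative to the uniform measure, of the product measure on the cube under which
the sign of the `i`-th bit has mean `z i`. It is a signed density unless `z ∈ [-1, 1]^n`. -/
def biasedDensity (z : Fin n → ℝ) (y : Fin n → Bool) : ℝ := ∏ i, (1 + z i * spin (y i))

lemma biasedDensity_nonneg {z : Fin n → ℝ} (hz : ∀ i, z i ∈ Set.Icc (-1) 1) (y : Fin n → Bool) :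
    0 ≤ biasedDensity z y :=
  prod_nonneg fun i _ => one_add_mul_spin_nonneg (hz i) (y i)

lemma expect_biasedDensity (z : Fin n → ℝ) : 𝔼 y, biasedDensity z y = 1 := by
  have hsum := prod_univ_sum (fun _ : Fin n => (univ : Finset Bool)) (fun i b => 1 + z i * spin b)
  rw [Fintype.piFinset_univ] at hsum
  have hfactor (i : Fin n) : ∑ b, (1 + z i * spin b) = 2 := by
    simp only [Fintype.sum_bool, spin, if_true, Bool.false_eq_true, if_false]
    ring
  simp only [biasedDensity, Fintype.expect_eq_sum_div_card, ← hsum, hfactor]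
  simp

lemma biasedDensity_update_zero (z : Fin n → ℝ) (i : Fin n) (y : Fin n → Bool) :
    biasedDensity (Function.update z i 0) y = ∏ j ∈ univ.erase i, (1 + z j * spin (y j)) := by
  rw [biasedDensity, ← mul_prod_erase univ _ (mem_univ i), Function.update_self, zero_mul, add_zero,
    one_mul]
  exact prod_congr rfl fun j hj => by rw [Function.update_of_ne (ne_of_mem_erase hj)]

lemma biasedDensity_eq_mul (z : Fin n → ℝ) (i : Fin n) (y : Fin n → Bool) :
    biasedDensity z y = (1 + z i * spin (y i)) * biasedDensity (Function.update z i 0) y := by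
  rw [biasedDensity_update_zero, mul_prod_erase univ (fun j => 1 + z j * spin (y j)) (mem_univ i),
    biasedDensity]

lemma biasedDensity_update_zero_hcFlip (z : Fin n → ℝ) (i : Fin n) (y : Fin n → Bool) :
    biasedDensity (Function.update z i 0) (hcFlip y i) =
      biasedDensity (Function.update z i 0) y := by
  simp only [biasedDensity_update_zero]
  exact prod_congr rfl fun j hj => by rw [hcFlip_apply_of_ne y (ne_of_mem_erase hj)]

lemma biasedDensity_spin (x y : Fin n → Bool) :
    biasedDensity (spin ∘ x) y = if x = y then 2 ^ n else 0 := by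
  split_ifs with h
  · simp [h, biasedDensity, spin_mul_self, one_add_one_eq_two]
  · obtain ⟨i, hi⟩ := Function.ne_iff.mp h
    have hy : y i = !(x i) := Bool.eq_not.mpr hi.symm
    exact prod_eq_zero (mem_univ i) (by simp [hy, spin_not, spin_mul_self])

lemma hasDerivAt_biasedDensity_smul (w : Fin n → ℝ) (y : Fin n → Bool) (ρ : ℝ) :
    HasDerivAt (fun r : ℝ => biasedDensity (r • w) y)
      (∑ i, w i * (spin (y i) * biasedDensity (Function.update (ρ • w) i 0) y)) ρ := by
  have hprod := HasDerivAt.fun_finsetProd (u := univ) (x := ρ)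
    (f := fun i r => 1 + r * w i * spin (y i)) (f' := fun i => w i * spin (y i))
    fun i _ => by
      simpa using (((hasDerivAt_id ρ).mul_const (w i)).mul_const (spin (y i))).const_add 1
  refine hprod.congr_deriv (sum_congr rfl fun i _ => ?_)
  simp only [biasedDensity_update_zero, Pi.smul_apply, smul_eq_mul]
  ring

end BiasedMeasure

section MultilinearExtension

variable {n : ℕ}

/-- The multilinear polynomial `F : ℝⁿ → ℝ` agreeing with `f` at the vertices of the cube; its
value at `z ∈ [-1, 1]^n` is the expectation of `f` under the product measure with means `z`. -/
def multilinearExt (f : (Fin n → Bool) → ℝ) (z : Fin n → ℝ) : ℝ :=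
  𝔼 y, f y * biasedDensity z y

/-- The partial derivative `∂F / ∂zᵢ` of the multilinear extension `F` of `f`. -/
def partialExt (f : (Fin n → Bool) → ℝ) (i : Fin n) (z : Fin n → ℝ) : ℝ :=
  multilinearExt (fun y => f y * spin (y i)) (Function.update z i 0)

lemma partialExt_update (f : (Fin n → Bool) → ℝ) (i : Fin n) (z : Fin n → ℝ) (t : ℝ) :
    partialExt f i (Function.update z i t) = partialExt f i z := by
  rw [partialExt, Function.update_idem, partialExt]

lemma multilinearExt_spin (f : (Fin n → Bool) → ℝ) (x : Fin n → Bool) :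
    multilinearExt f (spin ∘ x) = f x := by
  simp only [multilinearExt, biasedDensity_spin, Fintype.expect_eq_sum_div_card]
  simp

lemma multilinearExt_sum_mul {ι : Type*} (s : Finset ι) (u : ι → ℝ)
    (g : ι → (Fin n → Bool) → ℝ) (z : Fin n → ℝ) :
    multilinearExt (fun y => ∑ i ∈ s, u i * g i y) z = ∑ i ∈ s, u i * multilinearExt (g i) z := by
  simp only [multilinearExt, sum_mul, expect_sum_comm, mul_expect, mul_assoc]

lemma multilinearExt_eq_zero_of_hcFlip_neg (i : Fin n) {f : (Fin n → Bool) → ℝ}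
    (hf : ∀ y, f (hcFlip y i) = -f y) (z : Fin n → ℝ) :
    multilinearExt f (Function.update z i 0) = 0 :=
  expect_eq_zero_of_hcFlip_neg i fun y => by
    rw [hf, biasedDensity_update_zero_hcFlip, neg_mul]

lemma hasDerivAt_multilinearExt_smul (f : (Fin n → Bool) → ℝ) (w : Fin n → ℝ) (ρ : ℝ) :
    HasDerivAt (fun r : ℝ => multilinearExt f (r • w)) (∑ i, w i * partialExt f i (ρ • w)) ρ := by
  have hsum := (HasDerivAt.fun_sum fun y (_ : y ∈ (univ : Finset (Fin n → Bool))) =>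
    (hasDerivAt_biasedDensity_smul w y ρ).const_mul (f y)).div_const
      (Fintype.card (Fin n → Bool) : ℝ)
  simp only [multilinearExt, Fintype.expect_eq_sum_div_card]
  refine hsum.congr_deriv ?_
  rw [← Fintype.expect_eq_sum_div_card]
  simp only [partialExt, multilinearExt, mul_sum, mul_expect, expect_sum_comm]
  exact sum_congr rfl fun i _ => expect_congr rfl fun y _ => by ring

lemma multilinearExt_mul_spin_sub (f : (Fin n → Bool) → ℝ) (i : Fin n) (z : Fin n → ℝ) :
    multilinearExt (fun y => f y * (spin (y i) - z i)) z = (1 - z i ^ 2) * partialExt f i z := by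
  simp only [partialExt, multilinearExt, mul_expect]
  refine expect_congr rfl fun y _ => ?_
  rw [biasedDensity_eq_mul z i]
  linear_combination
    f y * z i * biasedDensity (Function.update z i 0) y * spin_mul_self (y i)

lemma partialExt_spin_sub (i j : Fin n) (c : ℝ) (z : Fin n → ℝ) :
    partialExt (fun y => spin (y j) - c) i z = if j = i then 1 else 0 := by
  split_ifs with h
  · subst h
    have hodd : multilinearExt (fun y => -c * spin (y j)) (Function.update z j 0) = 0 :=
      multilinearExt_eq_zero_of_hcFlip_neg j (fun y => by
        rw [hcFlip_apply_self, spin_not, mul_neg]) z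
    calc partialExt (fun y => spin (y j) - c) j z
        = 𝔼 y, biasedDensity (Function.update z j 0) y +
            multilinearExt (fun y => -c * spin (y j)) (Function.update z j 0) := by
          rw [partialExt, multilinearExt, multilinearExt, ← expect_add_distrib]
          refine expect_congr rfl fun y _ => ?_
          linear_combination biasedDensity (Function.update z j 0) y * spin_mul_self (y j)
      _ = 1 := by rw [expect_biasedDensity, hodd, add_zero]
  · exact multilinearExt_eq_zero_of_hcFlip_neg i (fun y => by
      simp only [hcFlip_apply_of_ne y h, hcFlip_apply_self, spin_not, mul_neg]) z

lemma partialExt_sum_mul_spin_sub (u c : Fin n → ℝ) (i : Fin n) (z : Fin n → ℝ) :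
    partialExt (fun y => ∑ j, u j * (spin (y j) - c j)) i z = u i := by
  calc partialExt (fun y => ∑ j, u j * (spin (y j) - c j)) i z
      = ∑ j, u j * partialExt (fun y => spin (y j) - c j) i z := by
        simp only [partialExt, sum_mul, mul_assoc, multilinearExt_sum_mul]
    _ = u i := by simp [partialExt_spin_sub]

lemma multilinearExt_mul_sum_spin_sub (f : (Fin n → Bool) → ℝ) (u z : Fin n → ℝ) :
    multilinearExt (fun y => f y * ∑ i, u i * (spin (y i) - z i)) z =
      ∑ i, u i * ((1 - z i ^ 2) * partialExt f i z) := by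
  simp only [mul_sum, mul_left_comm (f _), multilinearExt_sum_mul, multilinearExt_mul_spin_sub]

/-- Bessel's inequality for the functions `yᵢ - zᵢ`, which are orthogonal under the product measure
with means `z`. -/
lemma sum_one_sub_sq_mul_partialExt_sq_le (f : (Fin n → Bool) → ℝ) {z : Fin n → ℝ}
    (hz : ∀ i, z i ∈ Set.Icc (-1) 1) :
    ∑ i, (1 - z i ^ 2) * partialExt f i z ^ 2 ≤ multilinearExt (fun y => f y ^ 2) z := by
  set P : (Fin n → Bool) → ℝ := fun y => ∑ i, partialExt f i z * (spin (y i) - z i) with hP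
  set Q : ℝ := ∑ i, (1 - z i ^ 2) * partialExt f i z ^ 2
  have hfP : multilinearExt (fun y => f y * P y) z = Q := by
    rw [multilinearExt_mul_sum_spin_sub]
    exact sum_congr rfl fun i _ => by ring
  have hPP : multilinearExt (fun y => P y * P y) z = Q := by
    rw [multilinearExt_mul_sum_spin_sub]
    exact sum_congr rfl fun i _ => by rw [hP, partialExt_sum_mul_spin_sub]; ring
  have hnonneg : 0 ≤ multilinearExt (fun y => (f y - P y) ^ 2) z :=
    expect_nonneg fun y _ => mul_nonneg (sq_nonneg _) (biasedDensity_nonneg hz y)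
  have hexpand : multilinearExt (fun y => (f y - P y) ^ 2) z =
      multilinearExt (fun y => f y ^ 2) z - 2 * multilinearExt (fun y => f y * P y) z +
        multilinearExt (fun y => P y * P y) z := by
    simp only [multilinearExt, mul_expect, ← expect_sub_distrib, ← expect_add_distrib]
    exact expect_congr rfl fun y _ => by ring
  linarith

end MultilinearExtension

section NoiseStability

variable {n : ℕ}

/-- The noise stability `𝔼 f(x) g(y)`, where `x` is uniform and `y` is a `ρ`-correlated copy of
`x`: given `x`, the signs of the bits of `y` are independent with means `ρ xᵢ`. -/
def noiseStab (ρ : ℝ) (f g : (Fin n → Bool) → ℝ) : ℝ :=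
  𝔼 x, f x * multilinearExt g (ρ • (spin ∘ x))

lemma noiseStab_one (f g : (Fin n → Bool) → ℝ) : noiseStab 1 f g = 𝔼 x, f x * g x := by
  simp only [noiseStab, one_smul, multilinearExt_spin]

lemma hasDerivAt_noiseStab (f g : (Fin n → Bool) → ℝ) (ρ : ℝ) :
    HasDerivAt (fun r => noiseStab r f g)
      (∑ i, 𝔼 x, f x * spin (x i) * partialExt g i (ρ • (spin ∘ x))) ρ := by
  have hsum := (HasDerivAt.fun_sum fun x (_ : x ∈ (univ : Finset (Fin n → Bool))) =>
    (hasDerivAt_multilinearExt_smul g (spin ∘ x) ρ).const_mul (f x)).div_const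
      (Fintype.card (Fin n → Bool) : ℝ)
  simp only [noiseStab, Fintype.expect_eq_sum_div_card]
  refine hsum.congr_deriv ?_
  simp only [← Fintype.expect_eq_sum_div_card, mul_sum, expect_sum_comm, Function.comp_apply,
    mul_assoc]

lemma partialExt_smul_spin_hcFlip (f : (Fin n → Bool) → ℝ) (ρ : ℝ) (x : Fin n → Bool)
    (i : Fin n) :
    partialExt f i (ρ • (spin ∘ hcFlip x i)) = partialExt f i (ρ • (spin ∘ x)) := by
  have hupdate : ρ • (spin ∘ hcFlip x i) =
      Function.update (ρ • (spin ∘ x)) i (ρ • spin (!(x i))) := by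
    rw [hcFlip, Function.comp_update]
    exact (Function.update_smul ρ (spin ∘ x) i (spin (!(x i)))).symm
  rw [hupdate, partialExt_update]

lemma chi_eq_prod_spin (S : Finset (Fin n)) (x : Fin n → Bool) :
    chi S x = ∏ i ∈ S, spin (x i) := rfl

lemma multilinearExt_eq_sum_fcoef (f : (Fin n → Bool) → ℝ) (z : Fin n → ℝ) :
    multilinearExt f z = ∑ S, fcoef n f S * ∏ i ∈ S, z i := by
  simp only [multilinearExt, biasedDensity, fcoef, hcExp_eq_expect, prod_one_add, powerset_univ,
    prod_mul_distrib, ← chi_eq_prod_spin, mul_sum, expect_sum_comm, expect_mul]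
  exact sum_congr rfl fun S _ => expect_congr rfl fun y _ => by ring

lemma noiseStab_eq_sum_fcoef (ρ : ℝ) (f g : (Fin n → Bool) → ℝ) :
    noiseStab ρ f g = ∑ S, fcoef n f S * fcoef n g S * ρ ^ #S := by
  simp only [noiseStab, multilinearExt_eq_sum_fcoef, Pi.smul_apply, smul_eq_mul,
    Function.comp_apply, prod_mul_distrib, prod_const, ← chi_eq_prod_spin, mul_sum,
    expect_sum_comm]
  refine sum_congr rfl fun S _ => ?_
  simp only [fcoef, hcExp_eq_expect (fun x => f x * chi S x), expect_mul]
  exact expect_congr rfl fun x _ => by ring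

/-- Log-convexity of the noise stability in `log ρ`, between `1` and `ρ ^ p`. -/
lemma noiseStab_self_le_rpow_mul_rpow (f : (Fin n → Bool) → ℝ) {ρ p : ℝ} (hρ : 0 ≤ ρ)
    (hp : 1 ≤ p) :
    noiseStab ρ f f ≤ noiseStab 1 f f ^ (1 - p⁻¹) * noiseStab (ρ ^ p) f f ^ p⁻¹ := by
  simp only [noiseStab_eq_sum_fcoef, one_pow, mul_one, Real.rpow_pow_comm hρ]
  exact Real.inner_le_weight_mul_Lp_of_nonneg univ hp _ _ (fun S => mul_self_nonneg _)
    fun S => pow_nonneg hρ _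

end NoiseStability

section Hypercontractivity

variable {n : ℕ}

lemma expect_cons (F : (Fin (n + 1) → Bool) → ℝ) :
    𝔼 x, F x = (𝔼 x, F (Fin.cons false x) + 𝔼 x, F (Fin.cons true x)) / 2 := by
  have hsplit : ∑ x, F x = ∑ x, F (Fin.cons true x) + ∑ x, F (Fin.cons false x) := by
    rw [← Equiv.sum_comp (Fin.consEquiv fun _ => Bool) F, Fintype.sum_prod_type, Fintype.sum_bool]
    rfl
  simp only [Fintype.expect_eq_sum_div_card, hsplit, Fintype.card_fun, Fintype.card_bool,
    Fintype.card_fin, pow_succ, Nat.cast_mul, Nat.cast_pow, Nat.cast_ofNat]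
  field_simp
  ring

lemma multilinearExt_cons (f : (Fin (n + 1) → Bool) → ℝ) (t : ℝ) (z : Fin n → ℝ) :
    multilinearExt f (Fin.cons t z) =
      ((1 + t) * multilinearExt (fun y => f (Fin.cons false y)) z +
        (1 - t) * multilinearExt (fun y => f (Fin.cons true y)) z) / 2 := by
  simp only [multilinearExt, expect_cons, mul_expect, biasedDensity, Fin.prod_univ_succ,
    Fin.cons_zero, Fin.cons_succ]
  simp only [spin, Bool.false_eq_true, if_true, if_false]
  congr 2 <;> exact expect_congr rfl fun y _ => by ring

lemma noiseStab_cons (ρ : ℝ) (f g : (Fin (n + 1) → Bool) → ℝ) :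
    noiseStab ρ f g =
      ((1 + ρ) * (noiseStab ρ (fun x => f (Fin.cons false x)) (fun x => g (Fin.cons false x)) +
          noiseStab ρ (fun x => f (Fin.cons true x)) (fun x => g (Fin.cons true x))) +
        (1 - ρ) * (noiseStab ρ (fun x => f (Fin.cons false x)) (fun x => g (Fin.cons true x)) +
          noiseStab ρ (fun x => f (Fin.cons true x)) (fun x => g (Fin.cons false x)))) / 4 := by
  have hpoint (b : Bool) (x : Fin n → Bool) :
      ρ • (spin ∘ (Fin.cons b x : Fin (n + 1) → Bool)) =
        (Fin.cons (ρ * spin b) (ρ • (spin ∘ x)) : Fin (n + 1) → ℝ) := by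
    ext i
    cases i using Fin.cases <;> simp
  simp only [noiseStab, expect_cons, hpoint, multilinearExt_cons, mul_add, mul_div_assoc',
    mul_expect, ← expect_add_distrib, expect_div]
  refine expect_congr rfl fun x _ => ?_
  simp only [spin, Bool.false_eq_true, if_true, if_false]
  ring

/-- The `L^p` norm of `f` under the uniform measure on the cube. -/
def hcLpNorm (p : ℝ) (f : (Fin n → Bool) → ℝ) : ℝ := (𝔼 x, |f x| ^ p) ^ p⁻¹

lemma hcLpNorm_nonneg (p : ℝ) (f : (Fin n → Bool) → ℝ) : 0 ≤ hcLpNorm p f :=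
  Real.rpow_nonneg (expect_nonneg fun _ _ => Real.rpow_nonneg (abs_nonneg _) p) _

lemma hcLpNorm_cons {p : ℝ} (hp : p ≠ 0) (f : (Fin (n + 1) → Bool) → ℝ) :
    hcLpNorm p f = ((hcLpNorm p (fun x => f (Fin.cons false x)) ^ p +
      hcLpNorm p (fun x => f (Fin.cons true x)) ^ p) / 2) ^ p⁻¹ := by
  have hpow (g : (Fin n → Bool) → ℝ) : hcLpNorm p g ^ p = 𝔼 x, |g x| ^ p :=
    Real.rpow_inv_rpow (expect_nonneg fun _ _ => Real.rpow_nonneg (abs_nonneg _) p) hp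
  rw [hpow, hpow, hcLpNorm, expect_cons]

lemma two_point_polynomial_ineq {p q : ℝ} (hp : 0 ≤ p) (hq : 0 ≤ q) :
    8 * (p ^ 6 + p ^ 3 * q ^ 3 + q ^ 6) ^ 2 ≤ 9 * (p ^ 4 + q ^ 4) ^ 3 := by
  have hfactor : 9 * (p ^ 4 + q ^ 4) ^ 3 - 8 * (p ^ 6 + p ^ 3 * q ^ 3 + q ^ 6) ^ 2 =
      (p - q) ^ 4 * (p ^ 8 + 4 * p ^ 7 * q + 9 * p ^ 6 * q ^ 2 + 4 * p ^ 5 * q ^ 3 +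
        (p ^ 3 * q - p * q ^ 3) ^ 2 + 4 * p ^ 3 * q ^ 5 + 9 * p ^ 2 * q ^ 6 + 4 * p * q ^ 7 +
        q ^ 8) := by ring
  rw [← sub_nonneg, hfactor]
  positivity

/-- Hypercontractivity on one bit: the left-hand side is the noise stability at `ρ = 1/3` of the
function with values `a` and `b`, the right-hand side its squared `L^(4/3)` norm. -/
lemma two_point_ineq {a b : ℝ} (ha : 0 ≤ a) (hb : 0 ≤ b) :
    (a ^ 2 + a * b + b ^ 2) / 3 ≤
      (((a ^ (4 / 3 : ℝ) + b ^ (4 / 3 : ℝ)) / 2) ^ (4 / 3 : ℝ)⁻¹) ^ 2 := by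
  have hcbrt {t : ℝ} (ht : 0 ≤ t) : ∃ p, 0 ≤ p ∧ p ^ 3 = t :=
    ⟨t ^ (3⁻¹ : ℝ), Real.rpow_nonneg ht _, by rw [← Real.rpow_mul_natCast ht]; norm_num⟩
  have hpow {p : ℝ} (hp : 0 ≤ p) : (p ^ 3) ^ (4 / 3 : ℝ) = p ^ 4 := by
    rw [← Real.rpow_natCast_mul hp]
    norm_num
  obtain ⟨p, hp, rfl⟩ := hcbrt ha
  obtain ⟨q, hq, rfl⟩ := hcbrt hb
  rw [hpow hp, hpow hq]
  have hsq : ((((p ^ 4 + q ^ 4) / 2) ^ (4 / 3 : ℝ)⁻¹) ^ 2) ^ 2 = ((p ^ 4 + q ^ 4) / 2) ^ 3 := by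
    rw [← pow_mul, ← Real.rpow_mul_natCast (by positivity)]
    norm_num
  refine le_of_sq_le_sq ?_ (by positivity)
  rw [hsq]
  linarith [two_point_polynomial_ineq hp hq]

/-- Cauchy–Schwarz for the quadratic form `(a² + a b + b²) / 3`. -/
lemma two_point_polarization {a₀ a₁ b₀ b₁ A B : ℝ} (hA : 0 ≤ A) (hB : 0 ≤ B)
    (ha : (a₀ ^ 2 + a₀ * a₁ + a₁ ^ 2) / 3 ≤ A ^ 2) (hb : (b₀ ^ 2 + b₀ * b₁ + b₁ ^ 2) / 3 ≤ B ^ 2) :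
    (2 * (a₀ * b₀ + a₁ * b₁) + (a₀ * b₁ + a₁ * b₀)) / 6 ≤ A * B := by
  refine le_of_sq_le_sq ?_ (mul_nonneg hA hB)
  calc ((2 * (a₀ * b₀ + a₁ * b₁) + (a₀ * b₁ + a₁ * b₀)) / 6) ^ 2
      ≤ (a₀ ^ 2 + a₀ * a₁ + a₁ ^ 2) / 3 * ((b₀ ^ 2 + b₀ * b₁ + b₁ ^ 2) / 3) := by
        nlinarith [sq_nonneg (a₀ * b₁ - a₁ * b₀)]
    _ ≤ A ^ 2 * B ^ 2 := mul_le_mul ha hb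
        (by nlinarith [sq_nonneg (b₀ + b₁), sq_nonneg b₀, sq_nonneg b₁]) (sq_nonneg A)
    _ = (A * B) ^ 2 := (mul_pow A B 2).symm

/-- The `(4/3, 4)`-hypercontractive inequality in its dual, bilinear form. At `ρ = 1/3` the
induction only needs the two-point inequality with exponent `4/3`, which is polynomial. -/
lemma noiseStab_one_third_le : ∀ {n : ℕ} (f g : (Fin n → Bool) → ℝ),
    noiseStab (1 / 3) f g ≤ hcLpNorm (4 / 3) f * hcLpNorm (4 / 3) g
  | 0, f, g => by
    have hexpect (F : (Fin 0 → Bool) → ℝ) : 𝔼 x, F x = F Fin.elim0 :=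
      (expect_congr rfl fun x _ => congrArg F (Subsingleton.elim x _)).trans
        (Fintype.expect_const _)
    have habs (h : (Fin 0 → Bool) → ℝ) : hcLpNorm (4 / 3) h = |h Fin.elim0| := by
      rw [hcLpNorm, hexpect, Real.rpow_rpow_inv (abs_nonneg _) (by norm_num)]
    have hstab : noiseStab (1 / 3) f g = f Fin.elim0 * g Fin.elim0 := by
      simp only [noiseStab, multilinearExt, biasedDensity, hexpect, univ_eq_empty, prod_empty,
        mul_one]
    rw [habs, habs, hstab, ← abs_mul]
    exact le_abs_self _
  | n + 1, f, g => by
    have hnorm := hcLpNorm_cons (n := n) (p := 4 / 3) (by norm_num)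
    have htwo (h : (Fin (n + 1) → Bool) → ℝ) := two_point_ineq
      (hcLpNorm_nonneg (4 / 3) fun x => h (Fin.cons false x))
      (hcLpNorm_nonneg (4 / 3) fun x => h (Fin.cons true x))
    simp only [← hnorm] at htwo
    have hpolar := two_point_polarization (hcLpNorm_nonneg _ f) (hcLpNorm_nonneg _ g)
      (htwo f) (htwo g)
    have ih (b c : Bool) := noiseStab_one_third_le (fun x => f (Fin.cons b x))
      (fun x => g (Fin.cons c x))
    rw [noiseStab_cons]
    linarith [ih false false, ih true true, ih false true, ih true false]

end Hypercontractivity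

section ColoredBoundary

variable {n : ℕ}

lemma toReal_mul_self (f : (Fin n → Bool) → Bool) (x : Fin n → Bool) :
    toReal f x * toReal f x = toReal f x := by
  unfold toReal
  split_ifs <;> norm_num

lemma toReal_nonneg (f : (Fin n → Bool) → Bool) (x : Fin n → Bool) : 0 ≤ toReal f x := by
  rw [← toReal_mul_self]
  exact mul_self_nonneg _

/-- The signed indicator of the sensitive edges of colour `b` at the points of value `b`: red edges
(`b = true`) are recorded at their endpoint of value `1`, blue ones at their endpoint of value
`0`. -/
def colorGrad (f : (Fin n → Bool) → Bool) (col : (Fin n → Bool) → Fin n → Bool) (b : Bool)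
    (x : Fin n → Bool) (i : Fin n) : ℝ :=
  if f x = b ∧ f (hcFlip x i) ≠ f x ∧ col x i = b then spin (x i) else 0

lemma sum_colorGrad_sq (f : (Fin n → Bool) → Bool) (col : (Fin n → Bool) → Fin n → Bool)
    (b : Bool) (x : Fin n → Bool) :
    ∑ i, colorGrad f col b x i ^ 2 = #{i | f x = b ∧ f (hcFlip x i) ≠ f x ∧ col x i = b} := by
  simp only [colorGrad, ite_pow, pow_two, spin_mul_self, mul_zero, sum_boole]

lemma sum_colorGrad_true_sq (f : (Fin n → Bool) → Bool) (col : (Fin n → Bool) → Fin n → Bool)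
    (x : Fin n → Bool) : ∑ i, colorGrad f col true x i ^ 2 = sRed f col x := by
  rw [sum_colorGrad_sq, sRed]
  split_ifs with h <;> simp [h]

lemma sum_colorGrad_false_sq (f : (Fin n → Bool) → Bool) (col : (Fin n → Bool) → Fin n → Bool)
    (x : Fin n → Bool) : ∑ i, colorGrad f col false x i ^ 2 = sBlue f col x := by
  rw [sum_colorGrad_sq, sBlue]
  split_ifs with h <;> simp [h]

lemma expect_toReal_mul_spin_eq_colorGrad (f : (Fin n → Bool) → Bool)
    {col : (Fin n → Bool) → Fin n → Bool} (hcol : colSymm col) (i : Fin n)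
    {g : (Fin n → Bool) → ℝ} (hg : ∀ x, g (hcFlip x i) = g x) :
    𝔼 x, toReal f x * spin (x i) * g x =
      𝔼 x, (colorGrad f col true x i - colorGrad f col false x i) * g x := by
  rw [← sub_eq_zero, ← expect_sub_distrib]
  refine expect_eq_zero_of_hcFlip_neg i fun x => ?_
  simp only [hg, toReal, colorGrad, hcFlip_hcFlip, hcFlip_apply_self, spin_not, hcol x i]
  cases f x <;> cases f (hcFlip x i) <;> cases col x i <;> simp

lemma talagrandCol_nonneg (f : (Fin n → Bool) → Bool) (col : (Fin n → Bool) → Fin n → Bool) :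
    0 ≤ talagrandCol f col := by
  simp only [talagrandCol, hcExp_eq_expect]
  exact add_nonneg (expect_nonneg fun _ _ => Real.sqrt_nonneg _)
    (expect_nonneg fun _ _ => Real.sqrt_nonneg _)

lemma sum_colorGrad_sub_mul_le (f : (Fin n → Bool) → Bool)
    (col : (Fin n → Bool) → Fin n → Bool) (x : Fin n → Bool) (v : Fin n → ℝ) :
    ∑ i, (colorGrad f col true x i - colorGrad f col false x i) * v i ≤
      (√(sRed f col x) + √(sBlue f col x)) * √(∑ i, v i ^ 2) := by
  have hred := Real.sum_mul_le_sqrt_mul_sqrt univ (colorGrad f col true x) v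
  have hblue := Real.sum_mul_le_sqrt_mul_sqrt univ (fun i => -colorGrad f col false x i) v
  simp only [neg_sq, neg_mul, sum_neg_distrib, sum_colorGrad_true_sq,
    sum_colorGrad_false_sq] at hred hblue
  simp only [sub_mul, sum_sub_distrib, add_mul]
  linarith

lemma sqrt_sum_partialExt_toReal_sq_le (f : (Fin n → Bool) → Bool) (x : Fin n → Bool) {ρ : ℝ}
    (hρ : ρ ∈ Set.Ioo (-1) 1) :
    √(∑ i, partialExt (toReal f) i (ρ • (spin ∘ x)) ^ 2) ≤ 1 / √(1 - ρ ^ 2) := by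
  have hz_sq (i : Fin n) : (ρ • (spin ∘ x)) i ^ 2 = ρ ^ 2 := by
    simp [mul_pow, pow_two (spin _), spin_mul_self]
  have hρ_sq : ρ ^ 2 < 1 := by nlinarith [hρ.1, hρ.2]
  have hz (i : Fin n) : (ρ • (spin ∘ x)) i ∈ Set.Icc (-1) 1 :=
    Set.mem_Icc.mpr (abs_le.mp ((sq_le_one_iff_abs_le_one _).mp ((hz_sq i).trans_le hρ_sq.le)))
  have hbessel := sum_one_sub_sq_mul_partialExt_sq_le (toReal f) hz
  simp only [hz_sq, ← mul_sum] at hbessel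
  have hle_one : multilinearExt (fun y => toReal f y ^ 2) (ρ • (spin ∘ x)) ≤ 1 := by
    rw [← expect_biasedDensity (ρ • (spin ∘ x))]
    refine expect_le_expect fun y _ => mul_le_of_le_one_left (biasedDensity_nonneg hz y) ?_
    nlinarith [toReal_mul_self f y]
  rw [← Real.sqrt_one, ← Real.sqrt_div zero_le_one, Real.sqrt_one]
  refine Real.sqrt_le_sqrt ?_
  rw [le_div_iff₀ (by linarith), mul_comm]
  exact hbessel.trans hle_one

lemma deriv_noiseStab_toReal_le (f : (Fin n → Bool) → Bool)
    {col : (Fin n → Bool) → Fin n → Bool} (hcol : colSymm col) {ρ : ℝ}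
    (hρ : ρ ∈ Set.Ioo (-1) 1) :
    deriv (fun r => noiseStab r (toReal f) (toReal f)) ρ ≤
      talagrandCol f col * (1 / √(1 - ρ ^ 2)) := by
  set G : (Fin n → Bool) → Fin n → ℝ := fun x i => partialExt (toReal f) i (ρ • (spin ∘ x))
  calc deriv (fun r => noiseStab r (toReal f) (toReal f)) ρ
      = ∑ i, 𝔼 x, toReal f x * spin (x i) * G x i := (hasDerivAt_noiseStab _ _ ρ).deriv
    _ = 𝔼 x, ∑ i, (colorGrad f col true x i - colorGrad f col false x i) * G x i := by
        rw [expect_sum_comm]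
        exact sum_congr rfl fun i _ => expect_toReal_mul_spin_eq_colorGrad f hcol i
          fun x => partialExt_smul_spin_hcFlip _ ρ x i
    _ ≤ 𝔼 x, (√(sRed f col x) + √(sBlue f col x)) * (1 / √(1 - ρ ^ 2)) := by
        refine expect_le_expect fun x _ => (sum_colorGrad_sub_mul_le f col x (G x)).trans ?_
        gcongr
        exact sqrt_sum_partialExt_toReal_sq_le f x hρ
    _ = talagrandCol f col * (1 / √(1 - ρ ^ 2)) := by
        rw [← expect_mul, expect_add_distrib, talagrandCol, hcExp_eq_expect, hcExp_eq_expect]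

lemma hcExp_toReal_sub_noiseStab_le (f : (Fin n → Bool) → Bool)
    {col : (Fin n → Bool) → Fin n → Bool} (hcol : colSymm col) {ρ : ℝ}
    (hρ : ρ ∈ Set.Icc (-1) 1) :
    hcExp n (toReal f) - noiseStab ρ (toReal f) (toReal f) ≤
      talagrandCol f col * Real.arccos ρ := by
  set T := talagrandCol f col
  set φ : ℝ → ℝ := fun r => noiseStab r (toReal f) (toReal f) + T * Real.arccos r with hφ
  have hstab : Differentiable ℝ fun r => noiseStab r (toReal f) (toReal f) :=
    fun r => (hasDerivAt_noiseStab _ _ r).differentiableAt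
  have hderiv (r : ℝ) (hr : r ∈ Set.Ioo (-1) 1) : HasDerivAt φ
      (deriv (fun r => noiseStab r (toReal f) (toReal f)) r + T * -(1 / √(1 - r ^ 2))) r :=
    (hstab r).hasDerivAt.add ((Real.hasDerivAt_arccos hr.1.ne' hr.2.ne).const_mul T)
  have hanti : AntitoneOn φ (Set.Icc (-1) 1) := by
    refine antitoneOn_of_deriv_nonpos (convex_Icc _ _)
      (hstab.continuous.add (Real.continuous_arccos.const_mul T)).continuousOn ?_ ?_ <;>
      rw [interior_Icc] <;> intro r hr
    · exact (hderiv r hr).differentiableAt.differentiableWithinAt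
    · rw [(hderiv r hr).deriv]
      linarith [deriv_noiseStab_toReal_le f hcol hr]
  have hone : φ 1 = hcExp n (toReal f) := by
    simp only [hφ, noiseStab_one, toReal_mul_self, Real.arccos_one, mul_zero, add_zero,
      hcExp_eq_expect]
  have hle : φ 1 ≤ φ ρ := hanti hρ (Set.right_mem_Icc.mpr (by norm_num)) hρ.2
  rw [hone] at hle
  linarith

end ColoredBoundary

section Isoperimetry

variable {n : ℕ}

lemma hcLpNorm_toReal {p : ℝ} (hp : p ≠ 0) (f : (Fin n → Bool) → Bool) :
    hcLpNorm p (toReal f) = hcExp n (toReal f) ^ p⁻¹ := by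
  rw [hcLpNorm, hcExp_eq_expect]
  congr 1
  refine expect_congr rfl fun x _ => ?_
  unfold toReal
  split_ifs <;> simp [hp]

lemma noiseStab_toReal_le_rpow (f : (Fin n → Bool) → Bool) (hf : 0 < hcExp n (toReal f)) {p : ℝ}
    (hp : 1 ≤ p) :
    noiseStab ((1 / 3) ^ p⁻¹) (toReal f) (toReal f) ≤ hcExp n (toReal f) ^ (1 + p⁻¹ / 2) := by
  set μ := hcExp n (toReal f) with hμ
  have hone : noiseStab 1 (toReal f) (toReal f) = μ := by
    simp only [noiseStab_one, toReal_mul_self, hμ, hcExp_eq_expect]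
  have hhyper : noiseStab (1 / 3) (toReal f) (toReal f) ≤ μ ^ (3 / 2 : ℝ) := by
    refine (noiseStab_one_third_le _ _).trans_eq ?_
    rw [hcLpNorm_toReal (by norm_num), ← hμ, ← Real.rpow_add hf]
    norm_num
  have hthird : 0 ≤ noiseStab (1 / 3) (toReal f) (toReal f) := by
    rw [noiseStab_eq_sum_fcoef]
    exact sum_nonneg fun S _ => mul_nonneg (mul_self_nonneg _) (by positivity)
  calc noiseStab ((1 / 3) ^ p⁻¹) (toReal f) (toReal f)
      ≤ μ ^ (1 - p⁻¹) * noiseStab (1 / 3) (toReal f) (toReal f) ^ p⁻¹ := by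
        have hconv := noiseStab_self_le_rpow_mul_rpow (toReal f) (ρ := (1 / 3) ^ p⁻¹)
          (by positivity) hp
        rwa [Real.rpow_inv_rpow (by norm_num) (by positivity), hone] at hconv
    _ ≤ μ ^ (1 - p⁻¹) * (μ ^ (3 / 2 : ℝ)) ^ p⁻¹ := by gcongr
    _ = μ ^ (1 + p⁻¹ / 2) := by
        rw [← Real.rpow_mul hf.le, ← Real.rpow_add hf]
        ring_nf

lemma arccos_le_mul_sqrt_one_sub {ρ : ℝ} (hρ : ρ ∈ Set.Icc (-1) 1) :
    Real.arccos ρ ≤ Real.pi / √2 * √(1 - ρ) := by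
  have hcos := Real.cos_le_one_sub_mul_cos_sq (x := Real.arccos ρ)
    (by rw [abs_of_nonneg (Real.arccos_nonneg ρ)]; exact Real.arccos_le_pi ρ)
  rw [Real.cos_arccos hρ.1 hρ.2] at hcos
  rw [div_mul_eq_mul_div, mul_div_assoc, ← Real.sqrt_div' _ zero_le_two,
    ← div_le_iff₀' Real.pi_pos]
  refine Real.le_sqrt_of_sq_le ?_
  rw [div_pow]
  linarith [div_mul_eq_mul_div 2 (Real.pi ^ 2) (Real.arccos ρ ^ 2),
    mul_div_assoc 2 (Real.arccos ρ ^ 2) (Real.pi ^ 2)]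

lemma one_third_rpow_mem_Icc {t : ℝ} (ht : 0 ≤ t) : (1 / 3 : ℝ) ^ t ∈ Set.Icc (-1) 1 :=
  ⟨(neg_nonpos.mpr zero_le_one).trans (by positivity),
    Real.rpow_le_one (by norm_num) (by norm_num) ht⟩

lemma arccos_one_third_rpow_le {L : ℝ} (hL : 0 < L) :
    Real.arccos ((1 / 3) ^ (2 * L)⁻¹) ≤ 5 / 2 / √L := by
  have hlog : Real.log 3 ≤ 2 := (Real.log_le_sub_one_of_pos (by norm_num)).trans (by norm_num)
  have hone_sub : 1 - (1 / 3 : ℝ) ^ (2 * L)⁻¹ ≤ 1 / L := by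
    rw [Real.rpow_def_of_pos (by norm_num), one_div, Real.log_inv]
    have hexp := Real.add_one_le_exp (-Real.log 3 * (2 * L)⁻¹)
    have : Real.log 3 * (2 * L)⁻¹ ≤ 2 * (2 * L)⁻¹ := by gcongr
    have : 2 * (2 * L)⁻¹ = L⁻¹ := by field_simp
    rw [one_div]
    linarith
  have hpi : Real.pi / √2 ≤ 5 / 2 := by
    rw [div_le_iff₀ (by positivity)]
    have : 7 / 5 ≤ √2 := Real.le_sqrt_of_sq_le (by norm_num)
    linarith [Real.pi_lt_d2]
  calc Real.arccos ((1 / 3) ^ (2 * L)⁻¹)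
      ≤ Real.pi / √2 * √(1 - (1 / 3) ^ (2 * L)⁻¹) :=
        arccos_le_mul_sqrt_one_sub (one_third_rpow_mem_Icc (by positivity))
    _ ≤ 5 / 2 * √(1 / L) := by gcongr
    _ = 5 / 2 / √L := by rw [Real.sqrt_div zero_le_one, Real.sqrt_one, mul_one_div]

lemma hcExp_mul_sqrt_log_le_talagrandCol (f : (Fin n → Bool) → Bool)
    {col : (Fin n → Bool) → Fin n → Bool} (hcol : colSymm col)
    (hpos : 0 < hcExp n (toReal f)) (hhalf : hcExp n (toReal f) ≤ 1 / 2) :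
    hcExp n (toReal f) * √(Real.log (1 / hcExp n (toReal f))) ≤ 25 / 2 * talagrandCol f col := by
  set μ := hcExp n (toReal f)
  set L := Real.log (1 / μ) with hL
  have hL_half : 1 / 2 ≤ L := by
    have := Real.log_le_log two_pos ((le_one_div two_pos hpos).mpr hhalf)
    linarith [Real.log_two_gt_d9]
  set ρ : ℝ := (1 / 3) ^ (2 * L)⁻¹
  have hρ_mem : ρ ∈ Set.Icc (-1) 1 := one_third_rpow_mem_Icc (by positivity)
  have hstab : noiseStab ρ (toReal f) (toReal f) ≤ 4 / 5 * μ := by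
    calc noiseStab ρ (toReal f) (toReal f)
        ≤ μ ^ (1 + (2 * L)⁻¹ / 2) := noiseStab_toReal_le_rpow f hpos (by linarith)
      _ = μ * Real.exp (-(1 / 4)) := by
          rw [Real.rpow_add hpos, Real.rpow_one, Real.rpow_def_of_pos hpos,
            show Real.log μ = -L by rw [hL, one_div, Real.log_inv, neg_neg]]
          congr 2
          field_simp
          norm_num
      _ ≤ 4 / 5 * μ := by
          have : Real.exp (-(1 / 4)) ≤ 4 / 5 := by
            rw [Real.exp_neg, inv_le_comm₀ (Real.exp_pos _) (by norm_num)]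
            linarith [Real.add_one_le_exp (1 / 4)]
          nlinarith
  have hdrop : μ / 5 ≤ talagrandCol f col * (5 / 2 / √L) := by
    have := mul_le_mul_of_nonneg_left (arccos_one_third_rpow_le (by linarith : 0 < L))
      (talagrandCol_nonneg f col)
    linarith [hcExp_toReal_sub_noiseStab_le f hcol hρ_mem]
  rw [← mul_div_assoc, le_div_iff₀ (Real.sqrt_pos.mpr (by linarith))] at hdrop
  linarith

lemma sub_sq_mul_sqrt_log_le {μ : ℝ} (hpos : 0 < μ) (hhalf : μ ≤ 1 / 2) :
    (μ - μ ^ 2) * √(Real.log (1 / (μ - μ ^ 2))) ≤ 2 * (μ * √(Real.log (1 / μ))) := by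
  have hsq : μ ^ 2 ≤ μ - μ ^ 2 := by nlinarith
  have hlog : Real.log (1 / (μ - μ ^ 2)) ≤ 2 * Real.log (1 / μ) := by
    calc Real.log (1 / (μ - μ ^ 2)) ≤ Real.log ((1 / μ) ^ 2) := by
          rw [one_div_pow]
          exact Real.log_le_log (one_div_pos.mpr ((sq_pos_of_pos hpos).trans_le hsq))
            (one_div_le_one_div_of_le (sq_pos_of_pos hpos) hsq)
      _ = 2 * Real.log (1 / μ) := by rw [Real.log_pow, Nat.cast_ofNat]
  have hlog_nonneg : 0 ≤ Real.log (1 / μ) :=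
    Real.log_nonneg ((one_le_div hpos).mpr (by linarith))
  have hsqrt : √(Real.log (1 / (μ - μ ^ 2))) ≤ 2 * √(Real.log (1 / μ)) := by
    rw [Real.sqrt_le_left (by positivity), mul_pow, Real.sq_sqrt hlog_nonneg]
    linarith
  calc (μ - μ ^ 2) * √(Real.log (1 / (μ - μ ^ 2))) ≤ μ * (2 * √(Real.log (1 / μ))) := by
        gcongr
        linarith [sq_nonneg μ]
    _ = 2 * (μ * √(Real.log (1 / μ))) := by ring

lemma hcVar_mul_sqrt_log_le_of_hcExp_le_half (f : (Fin n → Bool) → Bool)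
    {col : (Fin n → Bool) → Fin n → Bool} (hcol : colSymm col) (hvar : 0 < hcVar n f)
    (hhalf : hcExp n (toReal f) ≤ 1 / 2) :
    1 / 25 * hcVar n f * √(Real.log (1 / hcVar n f)) ≤ talagrandCol f col := by
  unfold hcVar at hvar ⊢
  have hpos : 0 < hcExp n (toReal f) := by
    have : 0 ≤ hcExp n (toReal f) := by
      rw [hcExp_eq_expect]
      exact expect_nonneg fun x _ => toReal_nonneg f x
    nlinarith
  linarith [sub_sq_mul_sqrt_log_le hpos hhalf,
    hcExp_mul_sqrt_log_le_talagrandCol f hcol hpos hhalf]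

lemma hcExp_toReal_not (f : (Fin n → Bool) → Bool) :
    hcExp n (toReal fun x => !(f x)) = 1 - hcExp n (toReal f) := by
  have hnot (x : Fin n → Bool) : toReal (fun x => !(f x)) x = 1 - toReal f x := by
    cases h : f x <;> simp [toReal, h]
  simp only [hcExp_eq_expect, hnot, expect_sub_distrib, Fintype.expect_const]

lemma hcVar_not (f : (Fin n → Bool) → Bool) : hcVar n (fun x => !(f x)) = hcVar n f := by
  rw [hcVar, hcVar, hcExp_toReal_not]
  ring

lemma talagrandCol_not (f : (Fin n → Bool) → Bool) (col : (Fin n → Bool) → Fin n → Bool) :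
    talagrandCol (fun x => !(f x)) (fun x i => !(col x i)) = talagrandCol f col := by
  have hred : sRed (fun x => !(f x)) (fun x i => !(col x i)) = sBlue f col := by
    funext x
    cases h : f x <;> simp [sRed, sBlue, h]
  have hblue : sBlue (fun x => !(f x)) (fun x i => !(col x i)) = sRed f col := by
    funext x
    cases h : f x <;> simp [sRed, sBlue, h]
  rw [talagrandCol, talagrandCol, hred, hblue, add_comm]

end Isoperimetry

theorem robust_talagrand_isoperimetry :
    ∃ c : ℝ, 0 < c ∧ ∀ (n : ℕ) (f : (Fin n → Bool) → Bool), 0 < hcVar n f →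
      ∀ col : (Fin n → Bool) → Fin n → Bool, colSymm col →
        talagrandCol f col ≥ c * hcVar n f * Real.sqrt (Real.log (1 / hcVar n f)) := by
  refine ⟨1 / 25, by norm_num, fun n f hvar col hcol => ?_⟩
  rcases le_total (hcExp n (toReal f)) (1 / 2) with hhalf | hhalf
  · exact hcVar_mul_sqrt_log_le_of_hcExp_le_half f hcol hvar hhalf
  · have hcompl := hcVar_mul_sqrt_log_le_of_hcExp_le_half (fun x => !(f x))
      (col := fun x i => !(col x i)) (fun x i => congrArg not (hcol x i)) (by rwa [hcVar_not])
      (by rw [hcExp_toReal_not]; linarith)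
    rwa [hcVar_not, talagrandCol_not] at hcompl

end
end
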